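/- Let β = (β_{l₁l₂})_{(l₁,l₂)∈Y_d} with each β_{l₁l₂} ≥ 1 and β_{l₁l₂} ≤ β_{l'₁0} for all (l₁,l₂) ∈ Y_d and l'₁ ∈ {1,…,d}. Define the quasi-norm q_β(x) = sup_{(l₁,l₂)∈Y_d} (β_{l₁l₂} |x_{l₁l₂}|)^{1/(l₁+l₂)} on G₀^#. Then: (a) q_β(x) ≥ 0 with equality iff x = 0; (b) q_β(x+y) + q_β(x·y) ≲ q_β(x) + q_β(y); (c) q_β(x^{-1}) ≃ q_β(x); (d) 1 + q_β(x) ≲ 1 + |βx| ≲ (1 + q_β(x))^{2d}, where βx := (β_{l₁l₂} x_{l₁l₂}). All implied constants depend only on d. -/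

import Mathlib

/-!
Write `n p = l₁ + l₂` (`homDeg`) for the homogeneous degree of `p = (l₁, l₂)`; on `Y_d` one has
`1 ≤ n p ≤ 2 d`. For `C ≥ 0`, the bound `q_β(x) ≤ C` is equivalent to the root-free family
`β_p |x_p| ≤ C ^ (n p)` (`weight_le_pow`, `qnorm_le`), so each claim becomes a coordinatewise
estimate. Linear terms are handled by superadditivity, `a ^ n + b ^ n ≤ (a + b) ^ n` for `n ≥ 1`.
The bilinear term of the group law is homogeneous of the right degree, and the hypothesis
`β_{l₁l₂} ≤ β_{l₁0}` together with `1 ≤ β_{l₂0}` gives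
`β_{l₁l₂} |x_{l₁0} y_{l₂0}| ≤ C ^ l₁ * C ^ l₂` whenever `q_β(x), q_β(y) ≤ C`
(`weight_bilinear_le`).
The inverse is an involution (`Ginv_Ginv`), so the two bounds comparing `q_β(x⁻¹)` and `q_β(x)`
are the same estimate.
The constant `3` works for every `d`.
-/

open scoped BigOperators

/-- The index set `Y_d = {(l₁, l₂) : 0 ≤ l₂ < l₁ ≤ d}`. -/
abbrev Yd (d : ℕ) := {p : Fin (d + 1) × Fin (d + 1) // (p.2 : ℕ) < (p.1 : ℕ)}

/-- The index `(l₁, 0)` associated to `p = (l₁, l₂) ∈ Y_d`. -/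
def idxA {d : ℕ} (p : Yd d) : Yd d :=
  ⟨(p.val.1, 0), by simpa using Nat.lt_of_le_of_lt (Nat.zero_le (p.val.2 : ℕ)) p.property⟩

/-- The index `(l₂, 0)` associated to `p = (l₁, l₂) ∈ Y_d` with `l₂ ≥ 1`. -/
def idxB {d : ℕ} (p : Yd d) (h : (p.val.2 : ℕ) ≠ 0) : Yd d :=
  ⟨(p.val.2, 0), by simpa using Nat.pos_of_ne_zero h⟩

/-- The step-two group multiplication on `G₀^# = R^{Y_d}`:
`[x·y]_{l₁0} = x_{l₁0} + y_{l₁0}` and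
`[x·y]_{l₁l₂} = x_{l₁l₂} + y_{l₁l₂} + x_{l₁0} y_{l₂0}` for `l₂ ≥ 1`. -/
def Gmul {R : Type*} [CommRing R] {d : ℕ} (x y : Yd d → R) : Yd d → R := fun p =>
  if h : (p.val.2 : ℕ) = 0 then x p + y p
  else x p + y p + x (idxA p) * y (idxB p h)

/-- The inverse in `G₀^#`: `g⁻¹ = (-g^{(1)}, -g^{(2)} + R₀(g^{(1)}, g^{(1)}))`. -/
def Ginv {R : Type*} [CommRing R] {d : ℕ} (x : Yd d → R) : Yd d → R := fun p =>
  if h : (p.val.2 : ℕ) = 0 then -x p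
  else -x p + x (idxA p) * x (idxB p h)

/-- The quasi-norm `q_β(x) = sup_{(l₁,l₂) ∈ Y_d} (β_{l₁l₂} |x_{l₁l₂}|)^{1/(l₁+l₂)}`. -/
noncomputable def qnorm {d : ℕ} (β : Yd d → ℝ) (x : Yd d → ℝ) : ℝ :=
  ⨆ p : Yd d, (β p * |x p|) ^ ((1 : ℝ) / (((p.val.1 : ℕ) : ℝ) + ((p.val.2 : ℕ) : ℝ)))

/-- The homogeneous degree `l₁ + l₂` of the index `(l₁, l₂)`. -/
def homDeg {d : ℕ} (p : Yd d) : ℕ := (p.val.1 : ℕ) + (p.val.2 : ℕ)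

lemma one_le_homDeg {d : ℕ} (p : Yd d) : 1 ≤ homDeg p := by
  have := p.property
  unfold homDeg
  omega

lemma homDeg_le {d : ℕ} (p : Yd d) : homDeg p ≤ 2 * d := by
  have h1 := p.val.1.isLt
  have h2 := p.val.2.isLt
  unfold homDeg
  omega

lemma homDeg_idxA_add_idxB {d : ℕ} (p : Yd d) (h : (p.val.2 : ℕ) ≠ 0) :
    homDeg (idxA p) + homDeg (idxB p h) = homDeg p := by
  simp [homDeg, idxA, idxB]

lemma qnorm_eq {d : ℕ} (β x : Yd d → ℝ) :
    qnorm β x = ⨆ p : Yd d, (β p * |x p|) ^ ((homDeg p : ℝ)⁻¹) := by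
  simp [qnorm, homDeg]

lemma weight_nonneg {d : ℕ} {β : Yd d → ℝ} (hβ : ∀ p, 1 ≤ β p) (x : Yd d → ℝ) (p : Yd d) :
    0 ≤ β p * |x p| :=
  mul_nonneg (zero_le_one.trans (hβ p)) (abs_nonneg _)

lemma qnorm_nonneg {d : ℕ} {β : Yd d → ℝ} (hβ : ∀ p, 1 ≤ β p) (x : Yd d → ℝ) :
    0 ≤ qnorm β x := by
  rw [qnorm_eq]
  exact Real.iSup_nonneg fun p => Real.rpow_nonneg (weight_nonneg hβ x p) _

lemma weight_le_pow {d : ℕ} {β : Yd d → ℝ} (hβ : ∀ p, 1 ≤ β p) (x : Yd d → ℝ) (p : Yd d) :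
    β p * |x p| ≤ qnorm β x ^ homDeg p := by
  have hn : homDeg p ≠ 0 := Nat.one_le_iff_ne_zero.mp (one_le_homDeg p)
  have h : (β p * |x p|) ^ ((homDeg p : ℝ)⁻¹) ≤ qnorm β x := by
    rw [qnorm_eq]
    exact le_ciSup (f := fun p : Yd d => (β p * |x p|) ^ ((homDeg p : ℝ)⁻¹))
      (Set.finite_range _).bddAbove p
  calc β p * |x p| = ((β p * |x p|) ^ ((homDeg p : ℝ)⁻¹)) ^ homDeg p :=
        (Real.rpow_inv_natCast_pow (weight_nonneg hβ x p) hn).symm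
    _ ≤ _ := pow_le_pow_left₀ (Real.rpow_nonneg (weight_nonneg hβ x p) _) h _

lemma qnorm_le {d : ℕ} {β : Yd d → ℝ} (hβ : ∀ p, 1 ≤ β p) {x : Yd d → ℝ} {C : ℝ}
    (hC : 0 ≤ C) (h : ∀ p, β p * |x p| ≤ C ^ homDeg p) : qnorm β x ≤ C := by
  rw [qnorm_eq]
  refine Real.iSup_le (fun p => ?_) hC
  have hn : homDeg p ≠ 0 := Nat.one_le_iff_ne_zero.mp (one_le_homDeg p)
  calc (β p * |x p|) ^ ((homDeg p : ℝ)⁻¹) ≤ (C ^ homDeg p) ^ ((homDeg p : ℝ)⁻¹) :=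
        Real.rpow_le_rpow (weight_nonneg hβ x p) (h p) (by positivity)
    _ = C := Real.pow_rpow_inv_natCast hC hn

lemma two_mul_pow_le {a : ℝ} (ha : 0 ≤ a) {n : ℕ} (hn : 1 ≤ n) : 2 * a ^ n ≤ (2 * a) ^ n := by
  rw [mul_pow]
  exact mul_le_mul_of_nonneg_right (le_self_pow₀ one_le_two (by omega)) (by positivity)

/-- The coordinatewise form of subadditivity of `q_β` under vector addition. -/
lemma weight_add_le {d : ℕ} {β : Yd d → ℝ} (hβ : ∀ p, 1 ≤ β p) (x y : Yd d → ℝ) (p : Yd d) :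
    β p * |x p + y p| ≤ (qnorm β x + qnorm β y) ^ homDeg p := by
  have hx := qnorm_nonneg hβ x
  have hy := qnorm_nonneg hβ y
  calc β p * |x p + y p| ≤ β p * (|x p| + |y p|) :=
        mul_le_mul_of_nonneg_left (abs_add_le _ _) (zero_le_one.trans (hβ p))
    _ = β p * |x p| + β p * |y p| := mul_add _ _ _
    _ ≤ qnorm β x ^ homDeg p + qnorm β y ^ homDeg p :=
        add_le_add (weight_le_pow hβ x p) (weight_le_pow hβ y p)
    _ ≤ _ := pow_add_pow_le hx hy (Nat.one_le_iff_ne_zero.mp (one_le_homDeg p))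

/-- The bilinear part of the group law is controlled because `β_{l₁l₂} ≤ β_{l₁0} β_{l₂0}`. -/
lemma weight_bilinear_le {d : ℕ} {β : Yd d → ℝ} (hβ : ∀ p, 1 ≤ β p)
    (hm : ∀ p q : Yd d, (q.val.2 : ℕ) = 0 → β p ≤ β q) (x y : Yd d → ℝ) (p : Yd d)
    (h : (p.val.2 : ℕ) ≠ 0) {C : ℝ} (hx : qnorm β x ≤ C) (hy : qnorm β y ≤ C) :
    β p * |x (idxA p) * y (idxB p h)| ≤ C ^ homDeg p := by
  have hC : 0 ≤ C := (qnorm_nonneg hβ x).trans hx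
  have hp : β p ≤ β (idxA p) * β (idxB p h) :=
    (hm p (idxA p) (by simp [idxA])).trans
      (le_mul_of_one_le_right (zero_le_one.trans (hβ _)) (hβ _))
  have hA : β (idxA p) * |x (idxA p)| ≤ C ^ homDeg (idxA p) :=
    (weight_le_pow hβ x _).trans (pow_le_pow_left₀ (qnorm_nonneg hβ x) hx _)
  have hB : β (idxB p h) * |y (idxB p h)| ≤ C ^ homDeg (idxB p h) :=
    (weight_le_pow hβ y _).trans (pow_le_pow_left₀ (qnorm_nonneg hβ y) hy _)
  calc β p * |x (idxA p) * y (idxB p h)|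
      ≤ β (idxA p) * β (idxB p h) * |x (idxA p) * y (idxB p h)| :=
        mul_le_mul_of_nonneg_right hp (abs_nonneg _)
    _ = (β (idxA p) * |x (idxA p)|) * (β (idxB p h) * |y (idxB p h)|) := by
        rw [abs_mul]; ring
    _ ≤ C ^ homDeg (idxA p) * C ^ homDeg (idxB p h) :=
        mul_le_mul hA hB (weight_nonneg hβ y _) (by positivity)
    _ = C ^ homDeg p := by rw [← pow_add, homDeg_idxA_add_idxB]

lemma qnorm_add_le {d : ℕ} {β : Yd d → ℝ} (hβ : ∀ p, 1 ≤ β p) (x y : Yd d → ℝ) :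
    qnorm β (x + y) ≤ qnorm β x + qnorm β y := by
  have hx := qnorm_nonneg hβ x
  have hy := qnorm_nonneg hβ y
  exact qnorm_le hβ (by positivity) (weight_add_le hβ x y)

/-- A sum of two coordinates, each of weight at most `C ^ homDeg p`, has weight at most
`(2 * C) ^ homDeg p`. -/
lemma weight_add_le_two_mul {d : ℕ} {β : Yd d → ℝ} (hβ : ∀ p, 1 ≤ β p) {p : Yd d} {a b C : ℝ}
    (hC : 0 ≤ C) (ha : β p * |a| ≤ C ^ homDeg p) (hb : β p * |b| ≤ C ^ homDeg p) :
    β p * |a + b| ≤ (2 * C) ^ homDeg p := by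
  have h1 : β p * |a + b| ≤ β p * (|a| + |b|) :=
    mul_le_mul_of_nonneg_left (abs_add_le _ _) (zero_le_one.trans (hβ p))
  have h2 := two_mul_pow_le hC (one_le_homDeg p)
  linarith [mul_add (β p) |a| |b|]

lemma qnorm_Gmul_le {d : ℕ} {β : Yd d → ℝ} (hβ : ∀ p, 1 ≤ β p)
    (hm : ∀ p q : Yd d, (q.val.2 : ℕ) = 0 → β p ≤ β q) (x y : Yd d → ℝ) :
    qnorm β (Gmul x y) ≤ 2 * (qnorm β x + qnorm β y) := by
  have hx := qnorm_nonneg hβ x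
  have hy := qnorm_nonneg hβ y
  refine qnorm_le hβ (by positivity) fun p => ?_
  have hadd := weight_add_le hβ x y p
  by_cases h : (p.val.2 : ℕ) = 0
  · rw [Gmul, dif_pos h]
    exact hadd.trans (pow_le_pow_left₀ (by positivity) (by linarith) _)
  · rw [Gmul, dif_neg h]
    exact weight_add_le_two_mul hβ (by positivity) hadd
      (weight_bilinear_le hβ hm x y p h (by linarith) (by linarith))

lemma qnorm_Ginv_le {d : ℕ} {β : Yd d → ℝ} (hβ : ∀ p, 1 ≤ β p)
    (hm : ∀ p q : Yd d, (q.val.2 : ℕ) = 0 → β p ≤ β q) (x : Yd d → ℝ) :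
    qnorm β (Ginv x) ≤ 2 * qnorm β x := by
  have hx := qnorm_nonneg hβ x
  refine qnorm_le hβ (by positivity) fun p => ?_
  have hneg : β p * |-x p| ≤ qnorm β x ^ homDeg p := by
    rw [abs_neg]
    exact weight_le_pow hβ x p
  by_cases h : (p.val.2 : ℕ) = 0
  · rw [Ginv, dif_pos h]
    exact hneg.trans (pow_le_pow_left₀ hx (by linarith) _)
  · rw [Ginv, dif_neg h]
    exact weight_add_le_two_mul hβ hx hneg
      (weight_bilinear_le hβ hm x x p h le_rfl le_rfl)

lemma Ginv_Ginv {d : ℕ} (x : Yd d → ℝ) : Ginv (Ginv x) = x := by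
  funext p
  by_cases h : (p.val.2 : ℕ) = 0
  · simp [Ginv, h]
  · have hA : Ginv x (idxA p) = -x (idxA p) := dif_pos (by simp [idxA])
    have hB : Ginv x (idxB p h) = -x (idxB p h) := dif_pos (by simp [idxB])
    have hp : Ginv x p = -x p + x (idxA p) * x (idxB p h) := dif_neg h
    rw [Ginv, dif_neg h, hA, hB, hp]
    ring

lemma qnorm_eq_zero_iff {d : ℕ} {β : Yd d → ℝ} (hβ : ∀ p, 1 ≤ β p) (x : Yd d → ℝ) :
    qnorm β x = 0 ↔ x = 0 := by
  constructor
  · intro h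
    funext p
    have hp := weight_le_pow hβ x p
    rw [h, zero_pow (Nat.one_le_iff_ne_zero.mp (one_le_homDeg p))] at hp
    have : |x p| ≤ β p * |x p| := le_mul_of_one_le_left (abs_nonneg _) (hβ p)
    exact abs_nonpos_iff.mp (this.trans hp)
  · rintro rfl
    exact le_antisymm (qnorm_le hβ le_rfl fun p => by simp) (qnorm_nonneg hβ _)

lemma abs_weight {d : ℕ} {β : Yd d → ℝ} (hβ : ∀ p, 1 ≤ β p) (x : Yd d → ℝ) (p : Yd d) :
    ‖β p * x p‖ = β p * |x p| := by
  rw [Real.norm_eq_abs, abs_mul, abs_of_nonneg (zero_le_one.trans (hβ p))]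

lemma qnorm_le_one_add_norm {d : ℕ} {β : Yd d → ℝ} (hβ : ∀ p, 1 ≤ β p) (x : Yd d → ℝ) :
    qnorm β x ≤ 1 + ‖(fun p => β p * x p : Yd d → ℝ)‖ := by
  refine qnorm_le hβ (by positivity) fun p => ?_
  have h1 : β p * |x p| ≤ ‖(fun p => β p * x p : Yd d → ℝ)‖ := by
    rw [← abs_weight hβ]
    exact norm_le_pi_norm (fun p => β p * x p : Yd d → ℝ) p
  have h2 := le_self_pow₀ (a := 1 + ‖(fun p => β p * x p : Yd d → ℝ)‖)
    (by linarith [norm_nonneg (fun p => β p * x p : Yd d → ℝ)])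
    (Nat.one_le_iff_ne_zero.mp (one_le_homDeg p))
  linarith

lemma norm_le_one_add_qnorm_pow {d : ℕ} {β : Yd d → ℝ} (hβ : ∀ p, 1 ≤ β p) (x : Yd d → ℝ) :
    ‖(fun p => β p * x p : Yd d → ℝ)‖ ≤ (1 + qnorm β x) ^ (2 * d) := by
  have hx := qnorm_nonneg hβ x
  refine (pi_norm_le_iff_of_nonneg (by positivity)).mpr fun p => ?_
  rw [abs_weight hβ]
  calc β p * |x p| ≤ qnorm β x ^ homDeg p := weight_le_pow hβ x p
    _ ≤ (1 + qnorm β x) ^ homDeg p := pow_le_pow_left₀ hx (by linarith) _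
    _ ≤ _ := pow_le_pow_right₀ (by linarith) (homDeg_le p)

/-- Properties of the quasi-norm `q_β` on `G₀^#` for weights `β` with `β_{l₁l₂} ≥ 1`
and `β_{l₁l₂} ≤ β_{l'₁0}`: (a) `q_β(x) ≥ 0` with equality iff `x = 0`;
(b) `q_β(x+y) + q_β(x·y) ≲ q_β(x) + q_β(y)`; (c) `q_β(x⁻¹) ≃ q_β(x)`;
(d) `1 + q_β(x) ≲ 1 + |βx| ≲ (1 + q_β(x))^{2d}`; constants depending only on `d`. -/
theorem stmt15 (d : ℕ) (hd : 1 ≤ d) :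
    ∃ c : ℝ, 1 ≤ c ∧
      ∀ β : Yd d → ℝ, (∀ p, 1 ≤ β p) →
        (∀ p q : Yd d, (q.val.2 : ℕ) = 0 → β p ≤ β q) →
        (∀ x : Yd d → ℝ, 0 ≤ qnorm β x ∧ (qnorm β x = 0 ↔ x = 0)) ∧
        (∀ x y : Yd d → ℝ,
          qnorm β (x + y) + qnorm β (Gmul x y) ≤ c * (qnorm β x + qnorm β y)) ∧
        (∀ x : Yd d → ℝ,
          qnorm β (Ginv x) ≤ c * qnorm β x ∧ qnorm β x ≤ c * qnorm β (Ginv x)) ∧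
        (∀ x : Yd d → ℝ,
          1 + qnorm β x ≤ c * (1 + ‖(fun p => β p * x p : Yd d → ℝ)‖) ∧
          1 + ‖(fun p => β p * x p : Yd d → ℝ)‖ ≤ c * (1 + qnorm β x) ^ (2 * d)) := by
  refine ⟨3, by norm_num, fun β hβ hm => ⟨fun x => ⟨qnorm_nonneg hβ x, qnorm_eq_zero_iff hβ x⟩,
    fun x y => ?_, fun x => ?_, fun x => ?_⟩⟩
  · linarith [qnorm_add_le hβ x y, qnorm_Gmul_le hβ hm x y]
  · have h1 := qnorm_Ginv_le hβ hm x
    have h2 := qnorm_Ginv_le hβ hm (Ginv x)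
    rw [Ginv_Ginv] at h2
    constructor <;> linarith [qnorm_nonneg hβ x, qnorm_nonneg hβ (Ginv x)]
  · have h0 := qnorm_nonneg hβ x
    have h1 := qnorm_le_one_add_norm hβ x
    have h2 := norm_le_one_add_qnorm_pow hβ x
    have h3 : 1 ≤ (1 + qnorm β x) ^ (2 * d) := one_le_pow₀ (by linarith)
    constructor <;> linarith [norm_nonneg (fun p => β p * x p : Yd d → ℝ)]
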